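/- arXiv:1902.04960 — 2 statements merged into one kernel-verified Lean document; each statement's English description precedes it below -/
import Mathlib

section
/- Let (H,X) be a minimal graphical conjunctive query, let G be a finite simple graph with an H-coloring c, and let a : X → V(G) be a map satisfying c(a(X)) = X. If h : H → G is a graph homomorphism whose restriction to X equals a, then h is colorful, i.e. c(h(V(H))) = V(H). -/
/-!
The composite `f = c ∘ h` is an endomorphism of `H` with `f(X) = X`. Let `R` be its range, so that
`X ⊆ R`. The query `(H[R], X)` is equivalent to `(H, X)`: restricting along `R ⊆ V(H)` sends partial
homomorphisms of `(H, X)` injectively to those of `(H[R], X)`, and precomposing with `f`, which maps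
`X` onto `X`, is an injection in the opposite direction. Both sets are finite, so their
cardinalities agree. Minimality of `(H, X)` now gives `|V(H)| ≤ |R|`, that is `R = V(H)`.
-/

/-- The set of partial homomorphisms of the graphical conjunctive query `(H, X)`
into `G`: maps `a : X → V(G)` that extend to a homomorphism `H → G`. -/
def partialHoms {α β : Type} (H : SimpleGraph α) (X : Set α) (G : SimpleGraph β) :
    Set (X → β) :=
  {a | ∃ h : H →g G, ∀ x : X, h x.val = a x}

/-- Two graphical conjunctive queries are equivalent if they have the same number
of partial homomorphisms into every finite simple graph. -/
def QueryEquiv {α β : Type} (H : SimpleGraph α) (X : Set α)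
    (H' : SimpleGraph β) (X' : Set β) : Prop :=
  ∀ (γ : Type) [Fintype γ], ∀ G : SimpleGraph γ,
    (partialHoms H X G).ncard = (partialHoms H' X' G).ncard

/-- A graphical conjunctive query is minimal if its pair (#vertices, #edges) is
lexicographically least among all equivalent queries. -/
def MinimalQuery {α : Type} [Fintype α] (H : SimpleGraph α) (X : Set α) : Prop :=
  ∀ (β : Type) [Fintype β], ∀ (H' : SimpleGraph β) (X' : Set β),
    QueryEquiv H X H' X' →
      Fintype.card α < Fintype.card β ∨
        (Fintype.card α = Fintype.card β ∧ H.edgeSet.ncard ≤ H'.edgeSet.ncard)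

/-- `c` is an `H`-coloring of `G`: a graph homomorphism on vertices. -/
def IsColoring {α β : Type} (G : SimpleGraph β) (H : SimpleGraph α) (c : β → α) : Prop :=
  ∀ ⦃a b : β⦄, G.Adj a b → H.Adj (c a) (c b)

/-- The image of an endomorphism `f` of `H` with `f(X) = X` carries a query equivalent to
`(H, X)`. -/
lemma queryEquiv_induce_range {α : Type} [Fintype α] (H : SimpleGraph α) (X : Set α)
    (f : H →g H) (hf : f '' X = X) :
    QueryEquiv H X (H.induce (Set.range f)) (Subtype.val ⁻¹' X) := by
  intro γ _ K
  have hXR : ∀ x ∈ X, x ∈ Set.range f := fun x hx => by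
    rw [← hf] at hx
    exact Set.image_subset_range _ _ hx
  have hfX : ∀ x ∈ X, f x ∈ X := fun x hx => by
    rw [← hf]
    exact Set.mem_image_of_mem _ hx
  apply le_antisymm
  · refine Set.ncard_le_ncard_of_injOn (fun a y => a ⟨y.1.1, y.2⟩) ?_ ?_ (Set.toFinite _)
    · rintro a ⟨g, hg⟩
      exact ⟨g.comp (SimpleGraph.Embedding.induce _).toHom, fun y => hg ⟨y.1.1, y.2⟩⟩
    · intro a _ b _ hab
      funext x
      exact congrFun hab ⟨⟨x.1, hXR x.1 x.2⟩, x.2⟩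
  · refine Set.ncard_le_ncard_of_injOn
      (fun a (x : X) => a ⟨⟨f x.1, Set.mem_range_self _⟩, hfX x.1 x.2⟩) ?_ ?_ (Set.toFinite _)
    · rintro a ⟨g, hg⟩
      let f' : H →g H.induce (Set.range f) :=
        ⟨fun v => ⟨f v, Set.mem_range_self _⟩, fun hvw => f.map_adj hvw⟩
      exact ⟨g.comp f', fun x => hg ⟨⟨f x.1, Set.mem_range_self _⟩, hfX x.1 x.2⟩⟩
    · intro a _ b _ hab
      funext y
      obtain ⟨⟨y, hyR⟩, hyX⟩ := y
      have hy : y ∈ f '' X := by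
        rw [hf]
        exact hyX
      obtain ⟨x, hx, rfl⟩ := hy
      exact congrFun hab ⟨x, hx⟩

/-- For minimal `(H, X)` and `a : X → V(G)` with `c(a(X)) = X`, any homomorphism
`h : H → G` extending `a` is colorful. -/
theorem stmt_3 {α β : Type} [Fintype α] [Fintype β]
    (H : SimpleGraph α) (X : Set α) (hmin : MinimalQuery H X)
    (G : SimpleGraph β) (c : β → α) (hc : IsColoring G H c)
    (a : X → β) (ha : c '' Set.range a = X)
    (h : H →g G) (hext : ∀ x : X, h x.val = a x) :
    Set.range (fun v => c (h v)) = Set.univ := by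
  classical
  let f : H →g H := ⟨fun v => c (h v), fun hvw => hc (h.map_adj hvw)⟩
  have hf : f '' X = X := by
    have hr : Set.range a = h '' X := by
      rw [Set.image_eq_range]
      exact congrArg Set.range (funext fun x => (hext x).symm)
    rw [hr, Set.image_image] at ha
    exact ha
  have hcard : Fintype.card α ≤ Fintype.card (Set.range f) := by
    rcases hmin _ _ _ (queryEquiv_induce_range H X f hf) with hlt | ⟨heq, _⟩
    · exact hlt.le
    · exact heq.le
  have hR : Set.range f = Set.univ := by
    rw [← Set.toFinset_card] at hcard
    exact Set.toFinset_eq_univ.mp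
      ((Finset.card_eq_iff_eq_univ _).mp (le_antisymm (Finset.card_le_univ _) hcard))
  exact hR
end

section
/- Let (H,X) and (H',X') be graphical conjunctive queries. Then #Hom((H,X) → G) = #Hom((H',X') → G) holds for every finite simple graph G if and only if both of the following hold: there exists a surjective map s : X → X' that extends to a graph homomorphism from H to H', and there exists a surjective map s' : X' → X that extends to a graph homomorphism from H' to H. -/
/-- `(H,X) ≥ (H',X')`: there is a surjective map `s : X → X'` that extends to a
graph homomorphism from `H` to `H'`. -/
def QueryGE {α β : Type} (H : SimpleGraph α) (X : Set α)
    (H' : SimpleGraph β) (X' : Set β) : Prop :=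
  ∃ s : X → X', Function.Surjective s ∧ ∃ h : H →g H', ∀ x : X, h x.val = (s x).val

theorem QueryGE.ncard_le {α β γ : Type} [Fintype α] [Fintype γ]
    {H : SimpleGraph α} {X : Set α} {H' : SimpleGraph β} {X' : Set β}
    (hs : QueryGE H X H' X') (G : SimpleGraph γ) :
    (partialHoms H' X' G).ncard ≤ (partialHoms H X G).ncard := by
  obtain ⟨s, hsurj, h, hh⟩ := hs
  refine Set.ncard_le_ncard_of_injOn (fun a => a ∘ s) ?_ ?_ (Set.toFinite _)
  · rintro a ⟨g, hg⟩
    exact ⟨g.comp h, fun x => by simp [hh, hg]⟩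
  · intro a _ b _ hab
    exact hsurj.injective_comp_right hab

/-- The blow-up of `G` in which the vertex `v` is replaced by `w v` independent clones. -/
def blowup {γ : Type} (G : SimpleGraph γ) (w : γ → ℕ) : SimpleGraph (Σ v, Fin (w v)) :=
  G.comap Sigma.fst

/-- A map into a blow-up without empty fibres is a partial homomorphism as soon as its projection
is one: the vertices outside `X` may be lifted to arbitrary clones. -/
theorem mem_partialHoms_blowup {α γ : Type} {H : SimpleGraph α} {X : Set α}
    {G : SimpleGraph γ} {w : γ → ℕ} (hw : ∀ v, 0 < w v) (b : X → Σ v, Fin (w v)) :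
    b ∈ partialHoms H X (blowup G w) ↔ (fun x => (b x).1) ∈ partialHoms H X G := by
  classical
  constructor
  · rintro ⟨h, hh⟩
    exact ⟨⟨fun u => (h u).1, fun huv => h.map_rel huv⟩, fun x => congrArg Sigma.fst (hh x)⟩
  · rintro ⟨h, hh⟩
    have key : ∀ u, (if hu : u ∈ X then b ⟨u, hu⟩ else ⟨h u, ⟨0, hw _⟩⟩ :
        Σ v, Fin (w v)).1 = h u := by
      intro u
      split_ifs with hu
      · exact (hh ⟨u, hu⟩).symm
      · rfl
    refine ⟨⟨fun u => if hu : u ∈ X then b ⟨u, hu⟩ else ⟨h u, ⟨0, hw _⟩⟩, ?_⟩, ?_⟩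
    · intro u v huv
      change G.Adj _ _
      rw [key, key]
      exact h.map_rel huv
    · intro x
      simp

/-- A partial homomorphism into a blow-up is a partial homomorphism into the base graph together
with a choice of clones. -/
def partialHomsBlowupEquiv {α γ : Type} (H : SimpleGraph α) (X : Set α)
    (G : SimpleGraph γ) (w : γ → ℕ) (hw : ∀ v, 0 < w v) :
    partialHoms H X (blowup G w) ≃ Σ a : partialHoms H X G, ∀ x : X, Fin (w (a.1 x)) where
  toFun b := ⟨⟨fun x => (b.1 x).1, (mem_partialHoms_blowup hw b.1).1 b.2⟩, fun x => (b.1 x).2⟩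
  invFun p := ⟨fun x => ⟨p.1.1 x, p.2 x⟩, (mem_partialHoms_blowup hw _).2 p.1.2⟩
  left_inv _ := rfl
  right_inv _ := rfl

open Classical in
theorem card_partialHoms_blowup {α γ : Type} [Fintype α] [Fintype γ]
    (H : SimpleGraph α) (X : Set α) (G : SimpleGraph γ) (w : γ → ℕ) (hw : ∀ v, 0 < w v) :
    (partialHoms H X (blowup G w)).ncard = ∑ a : partialHoms H X G, ∏ x : X, w (a.1 x) := by
  rw [← Nat.card_coe_set_eq, Nat.card_congr (partialHomsBlowupEquiv H X G w hw),
    Nat.card_eq_fintype_card, Fintype.card_sigma]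
  simp

open Classical in
/-- The polynomial in the clone multiplicities that counts partial homomorphisms into blow-ups
of `G`. -/
noncomputable def countPoly {α γ : Type} [Fintype α] [Fintype γ]
    (H : SimpleGraph α) (X : Set α) (G : SimpleGraph γ) : MvPolynomial γ ℤ :=
  ∑ a : partialHoms H X G, MvPolynomial.monomial (∑ x : X, Finsupp.single (a.1 x) 1) 1

theorem eval_countPoly {α γ : Type} [Fintype α] [Fintype γ]
    (H : SimpleGraph α) (X : Set α) (G : SimpleGraph γ) (w : γ → ℕ) (hw : ∀ v, 0 < w v) :
    MvPolynomial.eval (fun v => (w v : ℤ)) (countPoly H X G) =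
      (partialHoms H X (blowup G w)).ncard := by
  classical
  rw [card_partialHoms_blowup H X G w hw, countPoly]
  simp only [MvPolynomial.monomial_sum_one, map_sum, map_prod]
  push_cast
  refine Finset.sum_congr (by congr) fun a _ => Finset.prod_congr (by congr) fun x _ => ?_
  simp [MvPolynomial.eval_monomial]

/-- There is no cancellation: the monomials of `countPoly` are exactly those contributed by the
partial homomorphisms. -/
theorem coeff_countPoly_ne_zero {α γ : Type} [Fintype α] [Fintype γ]
    (H : SimpleGraph α) (X : Set α) (G : SimpleGraph γ) (m : γ →₀ ℕ) [Fintype X] :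
    (countPoly H X G).coeff m ≠ 0 ↔
      ∃ a ∈ partialHoms H X G, ∑ x : X, Finsupp.single (a x) 1 = m := by
  classical
  rw [countPoly, MvPolynomial.coeff_sum, ne_eq, Finset.sum_eq_zero_iff_of_nonneg]
  · simp only [MvPolynomial.coeff_monomial, Finset.mem_univ, true_imp_iff, not_forall]
    constructor
    · rintro ⟨a, ha⟩
      refine ⟨a.1, a.2, ?_⟩
      by_contra hne
      exact ha (if_neg (by convert hne))
    · rintro ⟨a, ha, hm⟩
      refine ⟨⟨a, ha⟩, ?_⟩
      rw [if_pos (by convert hm)]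
      exact one_ne_zero
  · intro a _
    rw [MvPolynomial.coeff_monomial]
    split_ifs <;> simp

theorem countPoly_eq {α β γ : Type} [Fintype α] [Fintype β] [Fintype γ]
    {H : SimpleGraph α} {X : Set α} {H' : SimpleGraph β} {X' : Set β}
    (hcount : ∀ (δ : Type) [Fintype δ], ∀ G : SimpleGraph δ,
      (partialHoms H X G).ncard = (partialHoms H' X' G).ncard) (G : SimpleGraph γ) :
    countPoly H X G = countPoly H' X' G := by
  refine MvPolynomial.funext_set (fun _ => Set.Ioi (0 : ℤ)) (fun _ => Set.Ioi_infinite 0) fun t ht => ?_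
  have hpos : ∀ v, 0 < t v := fun v => ht v (Set.mem_univ v)
  obtain ⟨w, rfl⟩ : ∃ w : γ → ℕ, t = fun v => (w v : ℤ) :=
    ⟨fun v => (t v).toNat, funext fun v => (Int.toNat_of_nonneg (hpos v).le).symm⟩
  have hw : ∀ v, 0 < w v := fun v => Int.natCast_pos.1 (hpos v)
  rw [eval_countPoly _ _ _ _ hw, eval_countPoly _ _ _ _ hw, hcount]

theorem queryGE_of_count_eq {α β : Type} [Fintype α] [Fintype β]
    {H : SimpleGraph α} {X : Set α} {H' : SimpleGraph β} {X' : Set β}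
    (hcount : ∀ (δ : Type) [Fintype δ], ∀ G : SimpleGraph δ,
      (partialHoms H X G).ncard = (partialHoms H' X' G).ncard) :
    QueryGE H X H' X' := by
  classical
  -- the monomial contributed by the inclusion of `X'`
  let m : β →₀ ℕ := ∑ x : X', Finsupp.single x.1 1
  have hm : ∀ v, m v = if v ∈ X' then 1 else 0 := by
    intro v
    simp only [m, Finsupp.finsetSum_apply, Finsupp.single_apply]
    split_ifs with hv
    · rw [Finset.sum_eq_single ⟨v, hv⟩] <;> aesop
    · exact Finset.sum_eq_zero fun x _ => if_neg fun (h : x.1 = v) => hv (h ▸ x.2)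
  have hcoeff := congrArg (MvPolynomial.coeff m) (countPoly_eq hcount H')
  have hne : (countPoly H X H').coeff m ≠ 0 := by
    rw [hcoeff, coeff_countPoly_ne_zero]
    exact ⟨fun x => x.1, ⟨SimpleGraph.Hom.id, fun _ => rfl⟩, rfl⟩
  obtain ⟨a, ⟨h, hh⟩, ham⟩ := (coeff_countPoly_ne_zero _ _ _ _).1 hne
  have hmult : ∀ v, (∑ x : X, if a x = v then 1 else 0) = if v ∈ X' then 1 else 0 := by
    intro v
    rw [← hm, ← ham]
    simp [Finsupp.finsetSum_apply, Finsupp.single_apply]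
  have hmem : ∀ x, a x ∈ X' := by
    intro x
    by_contra hx
    have h0 := hmult (a x)
    rw [if_neg hx, Finset.sum_eq_zero_iff] at h0
    simpa using h0 x (Finset.mem_univ x)
  refine ⟨fun x => ⟨a x, hmem x⟩, ?_, h, hh⟩
  rintro ⟨v, hv⟩
  have h1 := hmult v
  rw [if_pos hv] at h1
  obtain ⟨x, -, hx⟩ := Finset.exists_ne_zero_of_sum_ne_zero (h1.trans_ne one_ne_zero)
  exact ⟨x, Subtype.ext (by simpa using hx)⟩

/-- Two graphical conjunctive queries have the same number of partial homomorphisms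
into every finite simple graph if and only if each maps surjectively to the other. -/
theorem stmt_10 {α β : Type} [Fintype α] [Fintype β]
    (H : SimpleGraph α) (X : Set α) (H' : SimpleGraph β) (X' : Set β) :
    (∀ (γ : Type) [Fintype γ], ∀ G : SimpleGraph γ,
        (partialHoms H X G).ncard = (partialHoms H' X' G).ncard) ↔
      (QueryGE H X H' X' ∧ QueryGE H' X' H X) := by
  constructor
  · intro hcount
    exact ⟨queryGE_of_count_eq hcount, queryGE_of_count_eq fun δ _ G => (hcount δ G).symm⟩
  · rintro ⟨h1, h2⟩ γ _ G
    exact le_antisymm (h2.ncard_le G) (h1.ncard_le G)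
end
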